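/- arXiv:0908.0162 — 2 statements merged into one kernel-verified Lean document; each statement's English description precedes it below -/
import Mathlib

section
/- Let 0 ≤ s < 1/2. There exists C > 0 such that for every finitely supported real sequence (a_n)_{n≥0}, if f(t) = ∑_{n≥0} a_n·cos(nt) and b_m = (2/π)·∫₀^π f(t)·sin(mt) dt for m ≥ 1, then ∑_{m≥1} m^{2s}·b_m² ≤ C · ∑_{n≥0} (1+n)^{2s}·a_n². -/
open Real

lemma bern_aux (β y : ℝ) (h0 : 0 < β) (h1 : β < 1) (hy : 1 ≤ y) :
    (y - 1) ^ β ≤ y ^ β * (1 - β / y) := by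
  have hy0 : 0 < y := by linarith
  have h := rpow_one_add_le_one_add_mul_self (s := -1 / y) (p := β)
    (by rw [le_div_iff₀ hy0]; linarith) h0.le h1.le
  have e : y - 1 = y * (1 + -1 / y) := by field_simp; ring
  have hn : 0 ≤ 1 + -1 / y := by
    have : 0 ≤ (y - 1) / y := div_nonneg (by linarith) hy0.le
    have e2 : (y - 1) / y = 1 + -1 / y := by field_simp; ring
    linarith
  rw [e, Real.mul_rpow hy0.le hn]
  have : 1 - β / y = 1 + β * (-1 / y) := by ring
  rw [this]
  exact mul_le_mul_of_nonneg_left h (Real.rpow_nonneg hy0.le _)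

lemma step1 (α y : ℝ) (h0 : 0 < α) (h1 : α < 1) (hy : 1 ≤ y) :
    y ^ (-α) ≤ (y ^ (1 - α) - (y - 1) ^ (1 - α)) / (1 - α) := by
  have hy0 : 0 < y := by linarith
  have h := bern_aux (1 - α) y (by linarith) (by linarith) hy
  rw [le_div_iff₀ (by linarith)]
  have e : y ^ (1 - α) = y ^ (-α) * y := by
    rw [← Real.rpow_add_one hy0.ne']; congr 1; ring
  have : y ^ (1 - α) * (1 - (1 - α) / y) = y ^ (1 - α) - y ^ (-α) * (1 - α) := by
    rw [e]; field_simp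
  linarith

lemma step2 (α y : ℝ) (h0 : 0 < α) (h1 : α < 1) (hy : 1 < y) :
    y ^ (-α) / y ≤ ((y - 1) ^ (-α) - y ^ (-α)) / α := by
  have hy0 : 0 < y := by linarith
  have h := bern_aux α y (by linarith) (by linarith) hy.le
  rw [le_div_iff₀ (by linarith), Real.rpow_neg hy0.le, Real.rpow_neg (by linarith)]
  have hA : 0 < y ^ α := Real.rpow_pos_of_pos hy0 _
  have hB : 0 < (y - 1) ^ α := Real.rpow_pos_of_pos (by linarith) _
  set A := y ^ α
  set B := (y - 1) ^ α
  have hz : α / y < 1 := by rw [div_lt_one hy0]; linarith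
  have hz0 : 0 < α / y := by positivity
  have e : A⁻¹ / y * α = A⁻¹ * (α / y) := by ring
  rw [e]
  set z := α / y
  have : A⁻¹ * (1 + z) ≤ B⁻¹ := by
    rw [inv_mul_eq_div, div_le_iff₀ hA, inv_mul_eq_div, le_div_iff₀ hB]
    nlinarith [mul_le_mul_of_nonneg_left h (by linarith : 0 ≤ 1 + z), mul_pos hA hz0, mul_pos (mul_pos hA hz0) hz0]
  linarith

lemma sum_bound_range (α : ℝ) (h0 : 0 < α) (h1 : α < 1) (X N : ℕ) (hX : 1 ≤ X) :
    ∑ n ∈ Finset.range N, ((n : ℝ) + 1) ^ (-α) / ((X : ℝ) + (n + 1)) ≤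
      if N ≤ X then (N : ℝ) ^ (1 - α) / ((1 - α) * X)
      else (X : ℝ) ^ (-α) * (1 / (1 - α) + 1 / α) - (N : ℝ) ^ (-α) / α := by
  have hX0 : (0 : ℝ) < X := by exact_mod_cast hX
  induction N with
  | zero => 
    have : (0 : ℝ) < 1 - α := by linarith
    simp only [Finset.range_zero, Finset.sum_empty, Nat.zero_le, if_true]
    positivity
  | succ N ih =>
    rw [Finset.sum_range_succ]
    have hN : (0 : ℝ) ≤ N := Nat.cast_nonneg _
    have hp : (0 : ℝ) < ((N : ℝ) + 1) ^ (-α) := Real.rpow_pos_of_pos (by positivity) _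
    by_cases hc : N + 1 ≤ X
    · rw [if_pos hc]
      rw [if_pos (by omega)] at ih
      have h := step1 α (N + 1) h0 h1 (by linarith)
      have h' : ((N : ℝ) + 1) ^ (-α) / ((X : ℝ) + (N + 1)) ≤ ((N : ℝ) + 1) ^ (-α) / X := by
        gcongr; linarith
      have h2 := div_le_div_of_nonneg_right h hX0.le
      rw [add_sub_cancel_right, div_div, sub_div] at h2
      push_cast
      linarith
    · rw [if_neg hc]
      have hXN : (X : ℝ) ≤ N := by exact_mod_cast (by omega : X ≤ N)
      have h := step2 α (N + 1) h0 h1 (by linarith)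
      have h' : ((N : ℝ) + 1) ^ (-α) / ((X : ℝ) + (N + 1)) ≤ ((N : ℝ) + 1) ^ (-α) / (N + 1) :=
        div_le_div_of_nonneg_left hp.le (by positivity) (by linarith)
      rw [add_sub_cancel_right, sub_div] at h
      push_cast
      by_cases hc' : N ≤ X
      · have hE : N = X := by omega
        subst hE
        rw [if_pos hc'] at ih
        have e : (N : ℝ) ^ (1 - α) / ((1 - α) * N) = (N : ℝ) ^ (-α) * (1 / (1 - α)) := by
          have : (N : ℝ) ^ (1 - α) = (N : ℝ) ^ (-α) * N := by
            rw [← Real.rpow_add_one hX0.ne']; congr 1; ring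
          have h3 : 1 - α ≠ 0 := by linarith
          rw [this]; field_simp
        rw [e] at ih
        have e2 : (N : ℝ) ^ (-α) * (1 / (1 - α) + 1 / α) = (N : ℝ) ^ (-α) * (1 / (1 - α)) + (N : ℝ) ^ (-α) / α := by ring
        linarith
      · rw [if_neg hc'] at ih
        linarith

lemma sum_bound (α : ℝ) (h0 : 0 < α) (h1 : α < 1) (m : ℕ) (S : Finset ℕ) :
    ∑ n ∈ S, ((n : ℝ) + 1) ^ (-α) / (((m : ℝ) + 1) + (n + 1)) ≤
      (1 / (1 - α) + 1 / α) * ((m : ℝ) + 1) ^ (-α) := by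
  obtain ⟨N, hN⟩ : ∃ N, S ⊆ Finset.range N := S.exists_nat_subset_range
  have hN' : S ⊆ Finset.range (max N (m + 2)) :=
    hN.trans (Finset.range_subset_range.2 (le_max_left _ _))
  have h := sum_bound_range α h0 h1 (m + 1) (max N (m + 2)) (by omega)
  rw [if_neg (by have := le_max_right N (m+2); omega)] at h
  push_cast at h
  refine (Finset.sum_le_sum_of_subset_of_nonneg hN' fun i _ _ => by positivity).trans (h.trans ?_)
  have : (0:ℝ) ≤ (max (N:ℝ) (m+2)) ^ (-α) / α := by positivity
  linarith

lemma schur (S M : Finset ℕ) (H : ℕ → ℕ → ℝ) (p : ℕ → ℝ) (A : ℝ) (hA : 0 ≤ A)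
    (hH : ∀ m n, 0 ≤ H m n) (hp : ∀ n, 0 < p n)
    (h1 : ∀ m, ∑ n ∈ S, H m n * p n ≤ A * p m)
    (h2 : ∀ n, ∑ m ∈ M, H m n * p m ≤ A * p n) (c : ℕ → ℝ) :
    ∑ m ∈ M, (∑ n ∈ S, H m n * |c n|) ^ 2 ≤ A ^ 2 * ∑ n ∈ S, c n ^ 2 := by
  have key : ∀ m, (∑ n ∈ S, H m n * |c n|) ^ 2 ≤ A * ∑ n ∈ S, (H m n * p m) * (c n ^ 2 / p n) := by
    intro m
    have := Finset.sum_sq_le_sum_mul_sum_of_sq_le_mul S (r := fun n => H m n * |c n|)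
      (f := fun n => H m n * p n) (g := fun n => H m n * (c n ^ 2 / p n))
      (fun i _ => mul_nonneg (hH _ _) (hp _).le)
      (fun i _ => mul_nonneg (hH _ _) (div_nonneg (sq_nonneg _) (hp _).le))
      (fun i _ => by
        have := (hp i).ne'
        apply le_of_eq; rw [mul_pow, sq_abs]; field_simp)
    refine this.trans ?_
    have e : A * ∑ n ∈ S, (H m n * p m) * (c n ^ 2 / p n) = (A * p m) * ∑ n ∈ S, H m n * (c n ^ 2 / p n) := by
      rw [mul_assoc, Finset.mul_sum _ _ (p m)]
      congr 1
      exact Finset.sum_congr rfl fun _ _ => by ring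
    rw [e]
    exact mul_le_mul_of_nonneg_right (h1 m) (Finset.sum_nonneg fun i _ => mul_nonneg (hH _ _) (div_nonneg (sq_nonneg _) (hp _).le))
  refine (Finset.sum_le_sum fun m _ => key m).trans ?_
  rw [← Finset.mul_sum, Finset.sum_comm, sq, mul_assoc]
  refine mul_le_mul_of_nonneg_left ?_ hA
  rw [Finset.mul_sum]
  refine Finset.sum_le_sum fun n _ => ?_
  rw [← Finset.sum_mul]
  refine (mul_le_mul_of_nonneg_right (h2 n) (div_nonneg (sq_nonneg _) (hp _).le)).trans ?_
  have := (hp n).ne'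
  apply le_of_eq; field_simp

/-- the integral kernel -/
noncomputable def KI (m n : ℕ) : ℝ := ∫ t in (0:ℝ)..π, Real.cos (n * t) * Real.sin (m * t)

lemma KI_formula (m n : ℕ) : KI m n * ((m:ℝ) ^ 2 - n ^ 2) = m * (1 - cos (n * π) * cos (m * π)) := by
  have hd : ∀ t : ℝ, HasDerivAt (fun t : ℝ => -(m * (cos (n * t) * cos (m * t)) + n * (sin (n * t) * sin (m * t))))
      ((cos (n * t) * sin (m * t)) * ((m:ℝ) ^ 2 - n ^ 2)) t := by
    intro t
    have l : ∀ k : ℕ, HasDerivAt (fun t : ℝ => (k:ℝ) * t) k t := fun k => by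
      simpa using (hasDerivAt_id t).const_mul (k:ℝ)
    have := ((((l n).cos.mul (l m).cos).const_mul (m:ℝ)).add (((l n).sin.mul (l m).sin).const_mul (n:ℝ))).neg
    refine HasDerivAt.congr_deriv (f' := _) this ?_
    ring
  have := intervalIntegral.integral_eq_sub_of_hasDerivAt (a := 0) (b := π) (fun t _ => hd t)
    (Continuous.intervalIntegrable (by fun_prop) _ _)
  rw [intervalIntegral.integral_mul_const] at this
  rw [KI, this]
  simp [Real.sin_nat_mul_pi]
  ring

lemma KI_diag (m : ℕ) : KI m m = 0 := by
  rcases Nat.eq_zero_or_pos m with rfl | hm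
  · simp [KI]
  have hm' : (m:ℝ) ≠ 0 := by positivity
  have hd : ∀ t : ℝ, HasDerivAt (fun t : ℝ => sin (m * t) ^ 2 / (2 * m)) (cos (m * t) * sin (m * t)) t := by
    intro t
    have l : HasDerivAt (fun t : ℝ => (m:ℝ) * t) m t := by
      simpa using (hasDerivAt_id t).const_mul (m:ℝ)
    refine HasDerivAt.congr_deriv (f' := _) ((l.sin.pow 2).div_const (2 * (m:ℝ))) ?_
    simp; field_simp
  have := intervalIntegral.integral_eq_sub_of_hasDerivAt (a := 0) (b := π) (fun t _ => hd t)
    (Continuous.intervalIntegrable (by fun_prop) _ _)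
  rw [KI, this]
  simp [Real.sin_nat_mul_pi]

lemma int_cos (k : ℤ) : ∫ t in (0:ℝ)..π, cos (k * t) = if k = 0 then π else 0 := by
  split_ifs with h
  · simp [h]
  · have hk : (k:ℝ) ≠ 0 := by exact_mod_cast h
    rw [intervalIntegral.integral_comp_mul_left (fun x => cos x) hk]
    simp [Real.sin_int_mul_pi]

lemma int_cc (m n : ℕ) : ∫ t in (0:ℝ)..π, cos (m * t) * cos (n * t) =
    ((if (m:ℤ) - n = 0 then π else 0) + (if (m:ℤ) + n = 0 then π else 0)) / 2 := by
  rw [← int_cos, ← int_cos, ← intervalIntegral.integral_add (Continuous.intervalIntegrable (by fun_prop) _ _)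
    (Continuous.intervalIntegrable (by fun_prop) _ _), ← intervalIntegral.integral_div]
  congr 1; ext t
  push_cast
  rw [sub_mul, add_mul, cos_sub, cos_add]; ring

lemma int_ss (m n : ℕ) : ∫ t in (0:ℝ)..π, sin (m * t) * sin (n * t) =
    ((if (m:ℤ) - n = 0 then π else 0) - (if (m:ℤ) + n = 0 then π else 0)) / 2 := by
  rw [← int_cos, ← int_cos, ← intervalIntegral.integral_sub (Continuous.intervalIntegrable (by fun_prop) _ _)
    (Continuous.intervalIntegrable (by fun_prop) _ _), ← intervalIntegral.integral_div]
  congr 1; ext t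
  push_cast
  rw [sub_mul, add_mul, cos_sub, cos_add]; ring

lemma int_prod (S M : Finset ℕ) (a b : ℕ → ℝ) (u v : ℕ → ℝ → ℝ) (hu : ∀ n, Continuous (u n))
    (hv : ∀ n, Continuous (v n)) :
    ∫ t in (0:ℝ)..π, (∑ n ∈ S, a n * u n t) * (∑ m ∈ M, b m * v m t) =
      ∑ n ∈ S, ∑ m ∈ M, a n * b m * ∫ t in (0:ℝ)..π, u n t * v m t := by
  simp_rw [Finset.sum_mul_sum]
  rw [intervalIntegral.integral_finsetSum (fun i _ => Continuous.intervalIntegrable (by fun_prop) _ _)]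
  refine Finset.sum_congr rfl fun n _ => ?_
  rw [intervalIntegral.integral_finsetSum (fun i _ => Continuous.intervalIntegrable (by fun_prop) _ _)]
  refine Finset.sum_congr rfl fun m _ => ?_
  rw [← intervalIntegral.integral_const_mul]
  congr 1; ext t; ring

lemma bessel (S M : Finset ℕ) (hM : ∀ m ∈ M, 1 ≤ m) (a : ℕ → ℝ) :
    ∑ m ∈ M, ((2 / π) * ∑ n ∈ S, a n * KI m n) ^ 2 ≤ 2 * ∑ n ∈ S, a n ^ 2 := by
  set b : ℕ → ℝ := fun m => (2 / π) * ∑ n ∈ S, a n * KI m n with hb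
  have hc : ∀ n : ℕ, Continuous (fun t : ℝ => cos (n * t)) := fun n => by fun_prop
  have hsn : ∀ n : ℕ, Continuous (fun t : ℝ => sin (n * t)) := fun n => by fun_prop
  have pp := Real.pi_pos
  have e1 : ∫ t in (0:ℝ)..π, (∑ n ∈ S, a n * cos (n * t)) * (∑ n ∈ S, a n * cos (n * t)) ≤ π * ∑ n ∈ S, a n ^ 2 := by
    rw [int_prod S S a a (fun n t => cos (n * t)) (fun n t => cos (n * t)) hc hc, Finset.mul_sum]
    refine Finset.sum_le_sum fun n hn => ?_
    rw [Finset.sum_eq_single_of_mem n hn]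
    · rw [int_cc]
      split_ifs <;> nlinarith [sq_nonneg (a n), mul_nonneg pp.le (sq_nonneg (a n))]
    · intro k _ hk
      rw [int_cc, if_neg (by omega), if_neg (by omega)]; simp
  have e2 : ∫ t in (0:ℝ)..π, (∑ n ∈ S, a n * cos (n * t)) * (∑ m ∈ M, b m * sin (m * t)) = π / 2 * ∑ m ∈ M, b m ^ 2 := by
    rw [int_prod S M a b (fun n t => cos (n * t)) (fun n t => sin (n * t)) hc hsn, Finset.sum_comm, Finset.mul_sum]
    refine Finset.sum_congr rfl fun m hm => ?_
    have : ∑ n ∈ S, a n * KI m n = π / 2 * b m := by rw [hb]; field_simp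
    calc _ = b m * ∑ n ∈ S, a n * KI m n := by
          rw [Finset.mul_sum]; exact Finset.sum_congr rfl fun n _ => by rw [KI]; ring
      _ = _ := by rw [this]; ring
  have e3 : ∫ t in (0:ℝ)..π, (∑ m ∈ M, b m * sin (m * t)) * (∑ m ∈ M, b m * sin (m * t)) = π / 2 * ∑ m ∈ M, b m ^ 2 := by
    rw [int_prod M M b b (fun n t => sin (n * t)) (fun n t => sin (n * t)) hsn hsn, Finset.mul_sum]
    refine Finset.sum_congr rfl fun m hm => ?_
    have := hM m hm
    rw [Finset.sum_eq_single_of_mem m hm]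
    · rw [int_ss, if_pos (by omega), if_neg (by omega)]; ring
    · intro k _ hk
      rw [int_ss, if_neg (by omega), if_neg (by omega)]; simp
  have e0 : 0 ≤ ∫ t in (0:ℝ)..π, ((∑ n ∈ S, a n * cos (n * t)) - (∑ m ∈ M, b m * sin (m * t))) ^ 2 :=
    intervalIntegral.integral_nonneg pp.le fun t _ => sq_nonneg _
  have e4 : ∫ t in (0:ℝ)..π, ((∑ n ∈ S, a n * cos (n * t)) - (∑ m ∈ M, b m * sin (m * t))) ^ 2 =
     (∫ t in (0:ℝ)..π, (∑ n ∈ S, a n * cos (n * t)) * (∑ n ∈ S, a n * cos (n * t))) -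
     2 * (∫ t in (0:ℝ)..π, (∑ n ∈ S, a n * cos (n * t)) * (∑ m ∈ M, b m * sin (m * t))) +
     ∫ t in (0:ℝ)..π, (∑ m ∈ M, b m * sin (m * t)) * (∑ m ∈ M, b m * sin (m * t)) := by
    rw [← intervalIntegral.integral_const_mul, ← intervalIntegral.integral_sub, ← intervalIntegral.integral_add]
    · congr 1; ext t; ring
    all_goals exact Continuous.intervalIntegrable (by fun_prop) _ _
  rw [e4, e2, e3] at e0
  have : π * (∑ m ∈ M, b m ^ 2) ≤ π * (2 * ∑ n ∈ S, a n ^ 2) := by linarith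
  exact le_of_mul_le_mul_left this pp

/-- dominating kernel -/
noncomputable def HK (s : ℝ) (m n : ℕ) : ℝ := (1 + (((m:ℝ) + 1) / (n + 1)) ^ s) / (((m:ℝ) + 1) + (n + 1))

lemma ratio_bound (s x y : ℝ) (hs0 : 0 ≤ s) (hs : s ≤ 1) (hx : 0 < x) (hy : 0 < y) :
    |(x / y) ^ s - 1| * x ≤ |x - y| * (1 + (x / y) ^ s) := by
  have hr : 0 < x / y := by positivity
  have hp : 0 < (x / y) ^ s := by positivity
  rcases le_total y x with h | h
  · have h1 : 1 ≤ x / y := by rwa [one_le_div hy]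
    have h2 : (x / y) ^ s ≤ x / y := by
      simpa using Real.rpow_le_rpow_of_exponent_le h1 hs
    have h3 : 1 ≤ (x / y) ^ s := Real.one_le_rpow h1 hs0
    rw [abs_of_nonneg (by linarith), abs_of_nonneg (by linarith)]
    rw [le_div_iff₀ hy] at h2
    nlinarith
  · have h1 : x / y ≤ 1 := by rwa [div_le_one hy]
    have h2 : x / y ≤ (x / y) ^ s := by
      simpa using Real.rpow_le_rpow_of_exponent_ge hr h1 hs
    have h3 : (x / y) ^ s ≤ 1 := Real.rpow_le_one hr.le h1 hs0
    rw [abs_of_nonpos (by linarith), abs_of_nonpos (by linarith)]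
    rw [div_le_iff₀ hy] at h2
    nlinarith [mul_nonneg hx.le (sub_nonneg.2 h3), mul_nonneg (sub_nonneg.2 h) (sub_nonneg.2 h3)]

lemma kernel_bound (s : ℝ) (hs0 : 0 ≤ s) (hs : s ≤ 1) (m n : ℕ) :
    |((((m:ℝ) + 1) / (n + 1)) ^ s - 1) * KI m n| ≤ 6 * HK s m n := by
  have hm : (0:ℝ) ≤ m := Nat.cast_nonneg _
  have hn : (0:ℝ) ≤ n := Nat.cast_nonneg _
  by_cases h : m = n
  · subst h; rw [KI_diag, mul_zero, abs_zero, HK]; positivity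
  have hf := KI_formula m n
  have h2 : |KI m n| * (|(m:ℝ) - n| * (m + n)) ≤ 2 * m := by
    have e : |KI m n| * (|(m:ℝ) - n| * (m + n)) = |KI m n * ((m:ℝ) ^ 2 - n ^ 2)| := by
      rw [abs_mul, sq_sub_sq, abs_mul, abs_of_nonneg (by positivity : (0:ℝ) ≤ m + n)]; ring
    rw [e, hf, abs_mul, abs_of_nonneg hm]
    have : |1 - cos (n * π) * cos (m * π)| ≤ 2 := by
      have h3 : |cos (n * π) * cos (m * π)| ≤ 1 := by
        rw [abs_mul]; exact mul_le_one₀ (abs_cos_le_one _) (abs_nonneg _) (abs_cos_le_one _)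
      rw [abs_le] at h3 ⊢
      constructor <;> linarith
    nlinarith
  have hmn : (1:ℝ) ≤ m + n := by exact_mod_cast (by omega : 1 ≤ m + n)
  have hd : 0 < |(m:ℝ) - n| := abs_pos.2 (sub_ne_zero.2 (by exact_mod_cast h))
  have hr := ratio_bound s (m + 1) (n + 1) hs0 hs (by positivity) (by positivity)
  rw [add_sub_add_right_eq_sub] at hr
  rw [abs_mul, HK, mul_div_assoc', le_div_iff₀ (by positivity)]
  set R := |(((m:ℝ) + 1) / (n + 1)) ^ s - 1|
  set Q := (((m:ℝ) + 1) / (n + 1)) ^ s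
  have hR : 0 ≤ R := abs_nonneg _
  set k := |KI m n|
  have hk : 0 ≤ k := abs_nonneg _
  set d := |(m:ℝ) - n|
  refine le_of_mul_le_mul_left ?_ hd
  calc d * (R * k * (m + 1 + (n + 1))) ≤ d * (R * k * (3 * (m + n))) := by
        gcongr; linarith
    _ = 3 * R * (k * (d * (m + n))) := by ring
    _ ≤ 3 * R * (2 * m) := by gcongr
    _ ≤ 6 * (R * (m + 1)) := by nlinarith
    _ ≤ 6 * (d * (1 + Q)) := by gcongr
    _ = _ := by ring

lemma HK_sums (s : ℝ) (hs0 : 0 ≤ s) (hs : s < 1 / 2) : ∃ A : ℝ, 0 ≤ A ∧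
    (∀ (S : Finset ℕ) (m : ℕ), ∑ n ∈ S, HK s m n * ((n:ℝ) + 1) ^ (-(1/2) : ℝ) ≤ A * ((m:ℝ) + 1) ^ (-(1/2) : ℝ)) ∧
    (∀ (M : Finset ℕ) (n : ℕ), ∑ m ∈ M, HK s m n * ((m:ℝ) + 1) ^ (-(1/2) : ℝ) ≤ A * ((n:ℝ) + 1) ^ (-(1/2) : ℝ)) := by
  have q1 : 0 < 1 / 2 + s := by linarith
  have q2 : 0 < 1 / 2 - s := by linarith
  refine ⟨(1 / (1 - 1/2) + 1 / (1/2)) + (1 / (1/2 - s) + 1 / (1/2 + s)), by positivity, ?_, ?_⟩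
  · intro S m
    have h1 := sum_bound (1/2) (by norm_num) (by norm_num) m S
    have h2 := sum_bound (1/2 + s) q1 (by linarith) m S
    have hm : (0:ℝ) < (m:ℝ) + 1 := by positivity
    have h3 := mul_le_mul_of_nonneg_left h2 (Real.rpow_nonneg hm.le s)
    have e : ∑ n ∈ S, HK s m n * ((n:ℝ) + 1) ^ (-(1/2) : ℝ) =
       ∑ n ∈ S, ((n : ℝ) + 1) ^ (-(1/2) : ℝ) / (((m : ℝ) + 1) + (n + 1)) + ((m:ℝ) + 1) ^ s * ∑ n ∈ S, ((n : ℝ) + 1) ^ (-(1/2 + s)) / (((m : ℝ) + 1) + (n + 1)) := by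
      rw [Finset.mul_sum, ← Finset.sum_add_distrib]
      refine Finset.sum_congr rfl fun n _ => ?_
      have hn : (0:ℝ) < (n:ℝ) + 1 := by positivity
      rw [HK, Real.div_rpow hm.le hn.le, neg_add, Real.rpow_add hn, Real.rpow_neg hn.le s]
      ring
    have e2 : ((m:ℝ) + 1) ^ s * ((1 / (1 - (1/2 + s)) + 1 / (1/2 + s)) * ((m:ℝ) + 1) ^ (-(1/2 + s))) = (1 / (1/2 - s) + 1 / (1/2 + s)) * ((m:ℝ) + 1) ^ (-(1/2) : ℝ) := by
      have : ((m:ℝ) + 1) ^ (-(1/2) : ℝ) = ((m:ℝ) + 1) ^ s * ((m:ℝ) + 1) ^ (-(1/2 + s)) := by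
        rw [← Real.rpow_add hm]; congr 1; ring
      rw [this, show 1 - (1/2 + s) = 1/2 - s by ring]; ring
    rw [e2] at h3
    rw [e, add_mul]
    exact add_le_add h1 h3
  · intro S m
    have h1 := sum_bound (1/2) (by norm_num) (by norm_num) m S
    have h2 := sum_bound (1/2 - s) q2 (by linarith) m S
    have hm : (0:ℝ) < (m:ℝ) + 1 := by positivity
    have h3 := mul_le_mul_of_nonneg_left h2 (Real.rpow_nonneg hm.le (-s))
    have e : ∑ n ∈ S, HK s n m * ((n:ℝ) + 1) ^ (-(1/2) : ℝ) =
       ∑ n ∈ S, ((n : ℝ) + 1) ^ (-(1/2) : ℝ) / (((m : ℝ) + 1) + (n + 1)) + ((m:ℝ) + 1) ^ (-s) * ∑ n ∈ S, ((n : ℝ) + 1) ^ (-(1/2 - s)) / (((m : ℝ) + 1) + (n + 1)) := by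
      rw [Finset.mul_sum, ← Finset.sum_add_distrib]
      refine Finset.sum_congr rfl fun n _ => ?_
      have hn : (0:ℝ) < (n:ℝ) + 1 := by positivity
      rw [HK, Real.div_rpow hn.le hm.le, neg_sub, show s - 1/2 = s + -(1/2) by ring, Real.rpow_add hn, Real.rpow_neg hm.le s, add_comm ((n:ℝ) + 1) (m + 1)]
      ring
    have e2 : ((m:ℝ) + 1) ^ (-s) * ((1 / (1 - (1/2 - s)) + 1 / (1/2 - s)) * ((m:ℝ) + 1) ^ (-(1/2 - s))) = (1 / (1/2 - s) + 1 / (1/2 + s)) * ((m:ℝ) + 1) ^ (-(1/2) : ℝ) := by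
      have : ((m:ℝ) + 1) ^ (-(1/2) : ℝ) = ((m:ℝ) + 1) ^ (-s) * ((m:ℝ) + 1) ^ (-(1/2 - s)) := by
        rw [← Real.rpow_add hm]; congr 1; ring
      rw [this, show 1 - (1/2 - s) = 1/2 + s by ring]; ring
    rw [e2] at h3
    rw [e, add_mul]
    exact add_le_add h1 h3

theorem stmt6 (s : ℝ) (hs0 : 0 ≤ s) (hs : s < 1 / 2) :
    ∃ C > 0, ∀ a : ℕ → ℝ, ∀ ha : (Function.support a).Finite,
      ∀ M : Finset ℕ, (∀ m ∈ M, 1 ≤ m) →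
        ∑ m ∈ M, (m : ℝ) ^ (2 * s) *
            ((2 / π) * ∫ t in (0:ℝ)..π,
              (∑ n ∈ ha.toFinset, a n * Real.cos (n * t)) * Real.sin (m * t)) ^ 2
          ≤ C * ∑ n ∈ ha.toFinset, (1 + (n : ℝ)) ^ (2 * s) * (a n) ^ 2 := by
  obtain ⟨A, hA, hA1, hA2⟩ := HK_sums s hs0 hs
  have pp := Real.pi_pos
  refine ⟨4 + 2 * ((2 / π) * 6) ^ 2 * A ^ 2, by positivity, ?_⟩
  intro a ha M hM
  set S := ha.toFinset
  set c : ℕ → ℝ := fun n => ((n:ℝ) + 1) ^ s * a n with hc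
  have hcsq : ∑ n ∈ S, (1 + (n : ℝ)) ^ (2 * s) * (a n) ^ 2 = ∑ n ∈ S, c n ^ 2 := by
    refine Finset.sum_congr rfl fun n _ => ?_
    rw [hc, mul_pow, ← Real.rpow_mul_natCast (by positivity), add_comm (1:ℝ)]
    congr 2; push_cast; ring
  rw [hcsq]
  have hB := bessel S M hM c
  have hS := schur S M (HK s) (fun n => ((n:ℝ) + 1) ^ (-(1/2) : ℝ)) A hA
    (fun m n => by rw [HK]; positivity) (fun n => by positivity) (hA1 S) (hA2 M) c
  have hI : ∀ m : ℕ, ∫ t in (0:ℝ)..π, (∑ n ∈ S, a n * Real.cos (n * t)) * Real.sin (m * t) =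
      ∑ n ∈ S, a n * KI m n := by
    intro m
    simp_rw [Finset.sum_mul]
    rw [intervalIntegral.integral_finsetSum (fun i _ => Continuous.intervalIntegrable (by fun_prop) _ _)]
    refine Finset.sum_congr rfl fun n _ => ?_
    rw [KI, ← intervalIntegral.integral_const_mul]
    congr 1; ext t; ring
  have key : ∀ m ∈ M, (m : ℝ) ^ (2 * s) *
            ((2 / π) * ∫ t in (0:ℝ)..π,
              (∑ n ∈ S, a n * Real.cos (n * t)) * Real.sin (m * t)) ^ 2 ≤
      2 * ((2 / π) * ∑ n ∈ S, c n * KI m n) ^ 2 + 2 * ((2 / π) * 6) ^ 2 * (∑ n ∈ S, HK s m n * |c n|) ^ 2 := by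
    intro m _
    rw [hI]
    have hm : (0:ℝ) < (m:ℝ) + 1 := by positivity
    have h1 : (m:ℝ) ^ (2 * s) ≤ (((m:ℝ) + 1) ^ s) ^ 2 := by
      rw [← Real.rpow_mul_natCast hm.le, show s * ((2:ℕ):ℝ) = 2 * s by push_cast; ring]
      exact Real.rpow_le_rpow (by positivity) (by linarith) (by linarith)
    have h2 : ((m:ℝ) + 1) ^ s * ∑ n ∈ S, a n * KI m n = ∑ n ∈ S, c n * KI m n +
        ∑ n ∈ S, (((((m:ℝ) + 1) / (n + 1)) ^ s - 1) * KI m n) * c n := by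
      rw [Finset.mul_sum, ← Finset.sum_add_distrib]
      refine Finset.sum_congr rfl fun n _ => ?_
      have hn : (0:ℝ) < (n:ℝ) + 1 := by positivity
      have hn2 := (Real.rpow_pos_of_pos hn s).ne'
      rw [hc, Real.div_rpow hm.le hn.le]
      field_simp
      ring
    have h3 : |∑ n ∈ S, (((((m:ℝ) + 1) / (n + 1)) ^ s - 1) * KI m n) * c n| ≤ 6 * ∑ n ∈ S, HK s m n * |c n| := by
      refine (Finset.abs_sum_le_sum_abs _ _).trans ?_
      rw [Finset.mul_sum]
      refine Finset.sum_le_sum fun n _ => ?_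
      rw [abs_mul, ← mul_assoc]
      exact mul_le_mul_of_nonneg_right (kernel_bound s hs0 (by linarith) m n) (abs_nonneg _)
    set X := ∑ n ∈ S, c n * KI m n
    set Y := ∑ n ∈ S, (((((m:ℝ) + 1) / (n + 1)) ^ s - 1) * KI m n) * c n
    set Z := ∑ n ∈ S, HK s m n * |c n|
    have h4 : Y ^ 2 ≤ (6 * Z) ^ 2 := sq_le_sq' (by linarith [abs_le.1 h3]) (abs_le.1 h3).2
    calc _ ≤ (((m:ℝ) + 1) ^ s) ^ 2 * ((2 / π) * ∑ n ∈ S, a n * KI m n) ^ 2 := by gcongr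
      _ = (2 / π) ^ 2 * (X + Y) ^ 2 := by rw [← h2]; ring
      _ ≤ (2 / π) ^ 2 * (2 * X ^ 2 + 2 * (6 * Z) ^ 2) := by
        gcongr; nlinarith [sq_nonneg (X - Y)]
      _ = _ := by ring
  refine (Finset.sum_le_sum key).trans ?_
  rw [Finset.sum_add_distrib, ← Finset.mul_sum, ← Finset.mul_sum]
  have := mul_le_mul_of_nonneg_left hS (by positivity : 0 ≤ 2 * ((2 / π) * 6) ^ 2)
  linarith
end

section
/- Let s ∈ (1/2, 2]. There exists C > 0 such that for every finitely supported real sequence (a_n)_{n≥0} satisfying ∑_{n≥0} a_n = 0 and ∑_{n≥0} (−1)^n·a_n = 0 (i.e. the function f(t) = ∑_{n≥0} a_n·cos(nt) vanishes at t=0 and t=π), if b_m = (2/π)·∫₀^π f(t)·sin(mt) dt for m ≥ 1, then ∑_{m≥1} m^{2s}·b_m² ≤ C · ∑_{n≥0} (1+n)^{2s}·a_n². -/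
open Real

lemma aux_lower (p : ℝ) (hp : 0 < p) (hp1 : p ≤ 1) (N : ℕ) :
    ∑ k ∈ Finset.Icc 1 N, (k : ℝ) ^ (p - 1) ≤ (N : ℝ) ^ p / p := by
  induction N with
  | zero => simp [Real.zero_rpow hp.ne']
  | succ N ih =>
    rw [Finset.sum_Icc_succ_top (by omega)]
    have hk : (0:ℝ) < ((N + 1 : ℕ) : ℝ) := by positivity
    have hb := rpow_one_add_le_one_add_mul_self (s := -1 / ((N + 1 : ℕ) : ℝ)) (p := p)
      (by rw [le_div_iff₀ hk]; push_cast; nlinarith [(Nat.cast_nonneg N : (0:ℝ) ≤ N)]) hp.le hp1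
    have e : (N : ℝ) = ((N + 1 : ℕ) : ℝ) * (1 + -1 / ((N + 1 : ℕ) : ℝ)) := by
      field_simp; push_cast; ring
    have e2 : (1 + -1 / ((N + 1 : ℕ) : ℝ)) = N / ((N + 1 : ℕ) : ℝ) := by
      field_simp; push_cast; ring
    have e3 : (N : ℝ) ^ p = ((N + 1 : ℕ) : ℝ) ^ p * (1 + -1 / ((N + 1 : ℕ) : ℝ)) ^ p := by
      rw [← Real.mul_rpow hk.le (by rw [e2]; positivity), ← e]
    have e4 : ((N + 1 : ℕ) : ℝ) ^ (p - 1) = ((N + 1 : ℕ) : ℝ) ^ p / ((N + 1 : ℕ) : ℝ) := by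
      rw [Real.rpow_sub hk, Real.rpow_one]
    have h5 : (N : ℝ) ^ p ≤ ((N + 1 : ℕ) : ℝ) ^ p - p * ((N + 1 : ℕ) : ℝ) ^ (p - 1) := by
      rw [e3, e4]
      calc _ ≤ ((N + 1 : ℕ) : ℝ) ^ p * (1 + p * (-1 / ((N + 1 : ℕ) : ℝ))) := by gcongr
        _ = _ := by ring
    calc _ ≤ (N : ℝ) ^ p / p + ((N + 1 : ℕ) : ℝ) ^ (p - 1) := by gcongr
      _ = ((N : ℝ) ^ p + p * ((N + 1 : ℕ) : ℝ) ^ (p - 1)) / p := by field_simp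
      _ ≤ _ := by gcongr; linarith

lemma aux_step (q : ℝ) (hq : 0 < q) (hq1 : q ≤ 1) (k : ℕ) (hk1 : 1 ≤ k) :
    (k : ℝ) ^ (-q - 1) ≤ 2 / q * ((k : ℝ) ^ (-q) - ((k + 1 : ℕ) : ℝ) ^ (-q)) := by
  have hk : (0:ℝ) < k := by exact_mod_cast hk1
  have hk1' : (1:ℝ) ≤ k := by exact_mod_cast hk1
  have hK : (0:ℝ) < ((k + 1 : ℕ) : ℝ) := by positivity
  have hb := rpow_one_add_le_one_add_mul_self (s := -1 / ((k + 1 : ℕ) : ℝ)) (p := q)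
      (by rw [le_div_iff₀ hK]; push_cast; nlinarith) hq.le hq1
  have e2 : (1 + -1 / ((k + 1 : ℕ) : ℝ)) = k / ((k + 1 : ℕ) : ℝ) := by
      field_simp; push_cast; ring
  rw [e2, Real.div_rpow hk.le hK.le] at hb
  have e : ((k + 1 : ℕ) : ℝ) ^ (-q) = (k : ℝ) ^ (-q) * ((k : ℝ) ^ q / ((k + 1 : ℕ) : ℝ) ^ q) := by
    rw [Real.rpow_neg hK.le, Real.rpow_neg hk.le]
    have := Real.rpow_pos_of_pos hk q
    field_simp
  have e4 : (k : ℝ) ^ (-q - 1) = (k : ℝ) ^ (-q) / k := by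
    rw [Real.rpow_sub hk, Real.rpow_one]
  have h6 : (1:ℝ) / k ≤ 2 / q * (q / ((k + 1 : ℕ) : ℝ)) := by
    have : 2 / q * (q / ((k + 1 : ℕ) : ℝ)) = 2 / ((k + 1 : ℕ) : ℝ) := by field_simp
    rw [this, div_le_div_iff₀ hk hK]; push_cast; linarith
  rw [e, e4]
  calc (k : ℝ) ^ (-q) / k = (k : ℝ) ^ (-q) * (1 / k) := by ring
    _ ≤ (k : ℝ) ^ (-q) * (2 / q * (q / ((k + 1 : ℕ) : ℝ))) := by gcongr
    _ ≤ (k : ℝ) ^ (-q) * (2 / q * (1 - (k : ℝ) ^ q / ((k + 1 : ℕ) : ℝ) ^ q)) := by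
        gcongr
        have : q * (-1 / ((k + 1 : ℕ) : ℝ)) = - (q / ((k + 1 : ℕ) : ℝ)) := by ring
        linarith
    _ = _ := by ring

lemma aux_upper (q : ℝ) (hq : 0 < q) (hq1 : q ≤ 1) (N : ℕ) (hN : 1 ≤ N) (S : Finset ℕ)
    (hS : ∀ n ∈ S, N ≤ n) :
    ∑ k ∈ S, (k : ℝ) ^ (-q - 1) ≤ 2 / q * (N : ℝ) ^ (-q) := by
  have key : ∀ L : ℕ, ∑ k ∈ Finset.Ico N (N + L), (k : ℝ) ^ (-q - 1) ≤
      2 / q * ((N : ℝ) ^ (-q) - ((N + L : ℕ) : ℝ) ^ (-q)) := by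
    intro L
    induction L with
    | zero => simp
    | succ L ih =>
      rw [← add_assoc, Finset.sum_Ico_succ_top (by omega)]
      have := aux_step q hq hq1 (N + L) (by omega)
      calc _ ≤ _ := add_le_add ih this
        _ = _ := by ring
  have hsub : S ⊆ Finset.Ico N (N + (S.sup id + 1)) := by
    intro n hn
    have h1 := hS n hn
    have h2 : n ≤ S.sup id := Finset.le_sup (f := id) hn
    simp; omega
  calc _ ≤ ∑ k ∈ Finset.Ico N (N + (S.sup id + 1)), (k : ℝ) ^ (-q - 1) :=
        Finset.sum_le_sum_of_subset_of_nonneg hsub (fun _ _ _ => by positivity)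
    _ ≤ _ := key _
    _ ≤ _ := by
      gcongr
      have : (0:ℝ) ≤ ((N + (S.sup id + 1) : ℕ) : ℝ) ^ (-q) := by positivity
      linarith

lemma aux_schur (S M : Finset ℕ) (D : ℕ → ℕ → ℝ) (w c : ℕ → ℝ) (A B : ℝ)
    (hA : 0 ≤ A)
    (hwS : ∀ n ∈ S, 0 < w n) (hwM : ∀ n ∈ M, 0 < w n)
    (h1 : ∀ m ∈ M, ∑ n ∈ S, |D m n| * w n ≤ A * w m)
    (h2 : ∀ n ∈ S, ∑ m ∈ M, |D m n| * w m ≤ B * w n) :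
    ∑ m ∈ M, (∑ n ∈ S, c n * D m n) ^ 2 ≤ A * B * ∑ n ∈ S, c n ^ 2 := by
  calc _ ≤ ∑ m ∈ M, (A * w m) * ∑ n ∈ S, |D m n| * (c n ^ 2 / w n) := by
        apply Finset.sum_le_sum
        intro m hm
        refine (Finset.sum_sq_le_sum_mul_sum_of_sq_le_mul S (f := fun n => |D m n| * w n)
          (g := fun n => |D m n| * (c n ^ 2 / w n)) (r := fun n => c n * D m n) ?_ ?_ ?_).trans ?_
        · intro n hn; have := hwS n hn; positivity
        · intro n hn; have := hwS n hn; positivity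
        · intro n hn; have := hwS n hn
          have h := sq_abs (D m n)
          refine le_of_eq ?_
          field_simp
          rw [h]
        · apply mul_le_mul_of_nonneg_right (h1 m hm)
          apply Finset.sum_nonneg
          intro n hn; have := hwS n hn; positivity
    _ = A * ∑ n ∈ S, (c n ^ 2 / w n) * ∑ m ∈ M, |D m n| * w m := by
        simp only [Finset.mul_sum]
        rw [Finset.sum_comm]
        refine Finset.sum_congr rfl fun n _ => Finset.sum_congr rfl fun m _ => ?_
        ring
    _ ≤ A * ∑ n ∈ S, (c n ^ 2 / w n) * (B * w n) := by
        apply mul_le_mul_of_nonneg_left _ hA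
        apply Finset.sum_le_sum
        intro n hn
        have := hwS n hn
        exact mul_le_mul_of_nonneg_left (h2 n hn) (by positivity)
    _ = _ := by
        rw [mul_assoc, Finset.mul_sum (a := B)]
        congr 1
        refine Finset.sum_congr rfl fun n hn => ?_
        have := hwS n hn
        field_simp

lemma aux_int_sin (k : ℤ) : ∫ t in (0:ℝ)..π, Real.sin (k * t) = (1 - (-1) ^ k) / k := by
  rcases eq_or_ne k 0 with rfl | hk
  · simp
  · have hk' : (k : ℝ) ≠ 0 := by exact_mod_cast hk
    rw [intervalIntegral.integral_comp_mul_left (fun x => Real.sin x) hk', integral_sin,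
      Real.cos_int_mul_pi]
    simp; ring

lemma aux_int_cos (k : ℤ) : ∫ t in (0:ℝ)..π, Real.cos (k * t) = if k = 0 then π else 0 := by
  rcases eq_or_ne k 0 with rfl | hk
  · simp
  · have hk' : (k : ℝ) ≠ 0 := by exact_mod_cast hk
    rw [intervalIntegral.integral_comp_mul_left (fun x => Real.cos x) hk', integral_cos,
      Real.sin_int_mul_pi]
    simp [hk]

lemma aux_cos_cos (m n : ℕ) (hm : 1 ≤ m) :
    ∫ t in (0:ℝ)..π, Real.cos (m * t) * Real.cos (n * t) = if m = n then π / 2 else 0 := by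
  have e : ∀ t : ℝ, Real.cos (m * t) * Real.cos (n * t) =
      (Real.cos (((m - n : ℤ) : ℝ) * t) + Real.cos (((m + n : ℤ) : ℝ) * t)) / 2 := by
    intro t
    push_cast
    rw [sub_mul, add_mul, Real.cos_sub, Real.cos_add]; ring
  simp_rw [e]
  rw [intervalIntegral.integral_div, intervalIntegral.integral_add
    (Continuous.intervalIntegrable (by fun_prop) _ _) (Continuous.intervalIntegrable (by fun_prop) _ _),
    aux_int_cos, aux_int_cos]
  have h1 : ¬ ((m : ℤ) + n = 0) := by omega
  have h2 : ((m : ℤ) - n = 0) ↔ m = n := by omega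
  simp only [h1, h2, if_false, add_zero]
  split_ifs <;> simp

lemma aux_sin_sin (m n : ℕ) (hm : 1 ≤ m) :
    ∫ t in (0:ℝ)..π, Real.sin (m * t) * Real.sin (n * t) = if m = n then π / 2 else 0 := by
  have e : ∀ t : ℝ, Real.sin (m * t) * Real.sin (n * t) =
      (Real.cos (((m - n : ℤ) : ℝ) * t) - Real.cos (((m + n : ℤ) : ℝ) * t)) / 2 := by
    intro t
    push_cast
    rw [sub_mul, add_mul, Real.cos_sub, Real.cos_add]; ring
  simp_rw [e]
  rw [intervalIntegral.integral_div, intervalIntegral.integral_sub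
    (Continuous.intervalIntegrable (by fun_prop) _ _) (Continuous.intervalIntegrable (by fun_prop) _ _),
    aux_int_cos, aux_int_cos]
  have h1 : ¬ ((m : ℤ) + n = 0) := by omega
  have h2 : ((m : ℤ) - n = 0) ↔ m = n := by omega
  simp only [h1, h2, if_false, sub_zero]
  split_ifs <;> simp

noncomputable def auxK (m n : ℕ) : ℝ := (1 - (-1) ^ m * (-1) ^ n) / ((m : ℝ) ^ 2 - (n : ℝ) ^ 2)

lemma aux_cos_sin (m n : ℕ) :
    ∫ t in (0:ℝ)..π, Real.cos (n * t) * Real.sin (m * t) = m * auxK m n := by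
  have e : ∀ t : ℝ, Real.cos (n * t) * Real.sin (m * t) =
      (Real.sin (((m + n : ℤ) : ℝ) * t) + Real.sin (((m - n : ℤ) : ℝ) * t)) / 2 := by
    intro t
    push_cast
    rw [sub_mul, add_mul, Real.sin_sub, Real.sin_add]; ring
  simp_rw [e]
  rw [intervalIntegral.integral_div, intervalIntegral.integral_add
    (Continuous.intervalIntegrable (by fun_prop) _ _) (Continuous.intervalIntegrable (by fun_prop) _ _),
    aux_int_sin, aux_int_sin]
  have hz1 : (-1 : ℝ) ^ ((m : ℤ) + n) = (-1) ^ m * (-1) ^ n := by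
    rw [zpow_add₀ (by norm_num)]; simp
  have hz2 : (-1 : ℝ) ^ ((m : ℤ) - n) = (-1) ^ m * (-1) ^ n := by
    rw [zpow_sub₀ (by norm_num)]
    rcases Nat.even_or_odd n with h | h <;> simp [h.neg_one_pow, div_neg]
  rw [hz1, hz2, auxK]
  rcases eq_or_ne m n with rfl | hne
  · have : (-1 : ℝ) ^ m * (-1) ^ m = 1 := by rw [← mul_pow]; simp
    simp [this]
  · have h1 : (m : ℝ) - n ≠ 0 := by rw [sub_ne_zero]; exact_mod_cast hne
    have h2 : (m : ℝ) + n ≠ 0 := by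
      have : m + n ≠ 0 := by omega
      exact_mod_cast this
    have h3 : (m : ℝ) ^ 2 - (n : ℝ) ^ 2 ≠ 0 := by
      rw [sq_sub_sq]; exact mul_ne_zero h2 h1
    push_cast
    have : (m : ℝ) ^ 2 - (n : ℝ) ^ 2 = (m + n) * (m - n) := by ring
    rw [this]
    field_simp
    ring

lemma aux_sum_int (S : Finset ℕ) (c : ℕ → ℝ) (u : ℕ → ℝ → ℝ) (v : ℝ → ℝ)
    (hu : ∀ n, Continuous (u n)) (hv : Continuous v) :
    ∫ t in (0:ℝ)..π, (∑ n ∈ S, c n * u n t) * v t = ∑ n ∈ S, c n * ∫ t in (0:ℝ)..π, u n t * v t := by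
  simp_rw [Finset.sum_mul, mul_assoc]
  rw [intervalIntegral.integral_finsetSum]
  · simp_rw [intervalIntegral.integral_const_mul]
  · intro i _
    have := hu i
    exact Continuous.intervalIntegrable (by fun_prop) _ _

lemma aux_sq_int (S : Finset ℕ) (c : ℕ → ℝ) (u : ℕ → ℝ → ℝ)
    (hu : ∀ n, Continuous (u n))
    (ho : ∀ m ∈ S, ∀ n ∈ S, ∫ t in (0:ℝ)..π, u m t * u n t = if m = n then π / 2 else 0) :
    ∫ t in (0:ℝ)..π, (∑ n ∈ S, c n * u n t) * (∑ n ∈ S, c n * u n t) =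
      π / 2 * ∑ n ∈ S, c n ^ 2 := by
  rw [aux_sum_int S c u _ hu (by fun_prop), Finset.mul_sum]
  refine Finset.sum_congr rfl fun n hn => ?_
  have : ∀ t, u n t * (∑ k ∈ S, c k * u k t) = (∑ k ∈ S, c k * u k t) * u n t := fun t => mul_comm _ _
  simp_rw [this]
  rw [aux_sum_int S c u _ hu (hu n), Finset.sum_congr rfl (fun k hk => by rw [ho k hk n hn])]
  simp [hn]; ring

lemma aux_bessel (S M : Finset ℕ) (c : ℕ → ℝ) (hS : ∀ n ∈ S, 1 ≤ n) (hM : ∀ n ∈ M, 1 ≤ n) :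
    ∑ m ∈ M, ((2 / π) * ∑ n ∈ S, c n * (m * auxK m n)) ^ 2 ≤ ∑ n ∈ S, c n ^ 2 := by
  set B : ℕ → ℝ := fun m => (2 / π) * ∑ n ∈ S, c n * (m * auxK m n) with hB
  set g : ℝ → ℝ := fun t => ∑ n ∈ S, c n * Real.cos (n * t) with hg
  set h : ℝ → ℝ := fun t => ∑ n ∈ M, B n * Real.sin (n * t) with hh
  have hgc : Continuous g := by fun_prop
  have hhc : Continuous h := by fun_prop
  have hgs : ∀ m : ℕ, ∫ t in (0:ℝ)..π, g t * Real.sin (m * t) = π / 2 * B m := by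
    intro m
    rw [aux_sum_int S c (fun n t => Real.cos (n * t)) (fun t => Real.sin (m * t))
      (fun n => by fun_prop) (by fun_prop)]
    simp_rw [aux_cos_sin, hB]
    have := Real.pi_pos
    rw [← mul_assoc, show π / 2 * (2 / π) = 1 by field_simp, one_mul]
  have hgg : ∫ t in (0:ℝ)..π, g t * g t = π / 2 * ∑ n ∈ S, c n ^ 2 :=
    aux_sq_int S c (fun n t => Real.cos (n * t)) (fun n => by fun_prop)
      (fun m hm n _ => aux_cos_cos m n (hS m hm))
  have hhh : ∫ t in (0:ℝ)..π, h t * h t = π / 2 * ∑ n ∈ M, B n ^ 2 :=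
    aux_sq_int M B (fun n t => Real.sin (n * t)) (fun n => by fun_prop)
      (fun m hm n _ => aux_sin_sin m n (hM m hm))
  have hhg : ∫ t in (0:ℝ)..π, h t * g t = π / 2 * ∑ n ∈ M, B n ^ 2 := by
    rw [aux_sum_int M B (fun n t => Real.sin (n * t)) g (fun n => by fun_prop) hgc, Finset.mul_sum]
    refine Finset.sum_congr rfl fun m _ => ?_
    have : ∀ t, Real.sin (m * t) * g t = g t * Real.sin (m * t) := fun t => mul_comm _ _
    simp_rw [this]
    rw [hgs]; ring
  have h0 : 0 ≤ ∫ t in (0:ℝ)..π, (g t - h t) ^ 2 :=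
    intervalIntegral.integral_nonneg Real.pi_pos.le (fun t _ => sq_nonneg _)
  have hexp : ∫ t in (0:ℝ)..π, (g t - h t) ^ 2 = (∫ t in (0:ℝ)..π, g t * g t)
      - 2 * (∫ t in (0:ℝ)..π, h t * g t) + ∫ t in (0:ℝ)..π, h t * h t := by
    rw [← intervalIntegral.integral_const_mul, ← intervalIntegral.integral_sub,
      ← intervalIntegral.integral_add]
    · congr 1; ext t; ring
    all_goals exact Continuous.intervalIntegrable (by fun_prop) _ _
  rw [hexp, hgg, hhg, hhh] at h0
  have hpi := Real.pi_pos
  have : 0 ≤ π / 2 * (∑ n ∈ S, c n ^ 2 - ∑ n ∈ M, B n ^ 2) := by linarith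
  have := nonneg_of_mul_nonneg_right this (by positivity)
  linarith

noncomputable def auxD (s : ℝ) (m n : ℕ) : ℝ := ((m : ℝ) ^ (s - 1) * (n : ℝ) ^ (2 - s) - m) * auxK m n

lemma aux_K_abs (m n : ℕ) : |auxK m n| ≤ 2 / |(m : ℝ) ^ 2 - (n : ℝ) ^ 2| := by
  rw [auxK, abs_div]
  gcongr
  rw [← pow_add]
  rcases Nat.even_or_odd (m + n) with h | h <;> norm_num [h.neg_one_pow]

lemma aux_D_low (s : ℝ) (hs0 : 0 < s) (hs : s ≤ 2) (m n : ℕ) (hn : 1 ≤ n) (hnm : n ≤ m) :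
    |auxD s m n| ≤ 2 * (m : ℝ)⁻¹ := by
  rcases hnm.eq_or_lt with rfl | hlt
  · simp [auxD, auxK]
  have hn' : (0:ℝ) < n := by exact_mod_cast hn
  have hlt' : (n:ℝ) < m := by exact_mod_cast hlt
  have hm' : (0:ℝ) < m := hn'.trans hlt'
  have hd : 0 < (m:ℝ) ^ 2 - (n:ℝ) ^ 2 := by nlinarith
  have hP1 : (n:ℝ) ^ 2 ≤ (m:ℝ) ^ s * (n:ℝ) ^ (2 - s) := by
    calc (n:ℝ) ^ 2 = (n:ℝ) ^ s * (n:ℝ) ^ (2 - s) := by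
          rw [← Real.rpow_add hn', ← Real.rpow_natCast]; norm_num
      _ ≤ _ := by gcongr
  have hP2 : (m:ℝ) ^ s * (n:ℝ) ^ (2 - s) ≤ (m:ℝ) ^ 2 := by
    calc _ ≤ (m:ℝ) ^ s * (m:ℝ) ^ (2 - s) := by gcongr
      _ = (m:ℝ) ^ 2 := by
          rw [← Real.rpow_add hm', ← Real.rpow_natCast]; norm_num
  have e : (m : ℝ) ^ (s - 1) * (n : ℝ) ^ (2 - s) - m =
      ((m:ℝ) ^ s * (n:ℝ) ^ (2 - s) - (m:ℝ) ^ 2) / m := by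
    rw [Real.rpow_sub hm', Real.rpow_one]; field_simp
  have hK := aux_K_abs m n
  rw [abs_of_pos hd] at hK
  rw [auxD, abs_mul, e, abs_div, abs_of_pos hm']
  have h1 : |(m:ℝ) ^ s * (n:ℝ) ^ (2 - s) - (m:ℝ) ^ 2| ≤ (m:ℝ) ^ 2 - (n:ℝ) ^ 2 := by
    rw [abs_le]; constructor <;> linarith
  calc _ ≤ ((m:ℝ) ^ 2 - (n:ℝ) ^ 2) / m * (2 / ((m:ℝ) ^ 2 - (n:ℝ) ^ 2)) := by gcongr
    _ = _ := by field_simp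

lemma aux_D_high (s σ : ℝ) (hσ : σ ≤ s) (hs0 : 0 < s) (hs : s ≤ 2) (m n : ℕ)
    (hm : 1 ≤ m) (hlt : m < n) :
    |auxD s m n| ≤ 2 * ((m : ℝ) ^ (σ - 1) * (n : ℝ) ^ (-σ)) := by
  have hm' : (0:ℝ) < m := by exact_mod_cast hm
  have hlt' : (m:ℝ) < n := by exact_mod_cast hlt
  have hn' : (0:ℝ) < n := hm'.trans hlt'
  have hd : 0 < (n:ℝ) ^ 2 - (m:ℝ) ^ 2 := by nlinarith
  have hr : (m:ℝ) / n ≤ 1 := by rw [div_le_one hn']; exact hlt'.le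
  have hrp : 0 < (m:ℝ) / n := by positivity
  set P := (m:ℝ) ^ s * (n:ℝ) ^ (2 - s) with hP
  have hPr : P = (m / n : ℝ) ^ s * (n:ℝ) ^ 2 := by
    rw [hP, Real.div_rpow hm'.le hn'.le, Real.rpow_sub hn', ← Real.rpow_natCast]
    push_cast; ring
  have hP1 : (m:ℝ) ^ 2 ≤ P := by
    calc (m:ℝ) ^ 2 = (m:ℝ) ^ s * (m:ℝ) ^ (2 - s) := by
          rw [← Real.rpow_add hm', ← Real.rpow_natCast]; norm_num
      _ ≤ _ := by rw [hP]; gcongr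
  have hrs : (m / n : ℝ) ^ s ≤ 1 := Real.rpow_le_one hrp.le hr hs0.le
  have hrσ : (m / n : ℝ) ^ s ≤ (m / n : ℝ) ^ σ := Real.rpow_le_rpow_of_exponent_ge hrp hr hσ
  have hP2 : P - (m:ℝ) ^ 2 ≤ (m / n : ℝ) ^ σ * ((n:ℝ) ^ 2 - (m:ℝ) ^ 2) := by
    calc _ ≤ (m / n : ℝ) ^ s * ((n:ℝ) ^ 2 - (m:ℝ) ^ 2) := by
          rw [hPr]; nlinarith [sq_nonneg (m:ℝ)]
      _ ≤ _ := by gcongr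
  have e : (m : ℝ) ^ (s - 1) * (n : ℝ) ^ (2 - s) - m = (P - (m:ℝ) ^ 2) / m := by
    rw [Real.rpow_sub hm', Real.rpow_one]; field_simp; rw [hP]
  have hK := aux_K_abs m n
  rw [abs_sub_comm, abs_of_pos hd] at hK
  rw [auxD, abs_mul, e, abs_div, abs_of_pos hm', abs_of_nonneg (by linarith : 0 ≤ P - (m:ℝ) ^ 2)]
  calc _ ≤ ((m / n : ℝ) ^ σ * ((n:ℝ) ^ 2 - (m:ℝ) ^ 2)) / m * (2 / ((n:ℝ) ^ 2 - (m:ℝ) ^ 2)) := by gcongr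
    _ = 2 * ((m / n : ℝ) ^ σ / m) := by field_simp
    _ = _ := by
      rw [Real.div_rpow hm'.le hn'.le, Real.rpow_sub hm', Real.rpow_one, Real.rpow_neg hn'.le]
      ring

lemma aux_row (s σ : ℝ) (hσ0 : 1 / 2 < σ) (hσ1 : σ ≤ 1) (hσ : σ ≤ s) (hs : s ≤ 2) (m : ℕ)
    (hm : 1 ≤ m) (S : Finset ℕ) (hS : ∀ n ∈ S, 1 ≤ n) :
    ∑ n ∈ S, |auxD s m n| * (n : ℝ) ^ (-(1 / 2) : ℝ) ≤
      (4 + 4 / (σ - 1 / 2)) * (m : ℝ) ^ (-(1 / 2) : ℝ) := by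
  have hm' : (0:ℝ) < m := by exact_mod_cast hm
  have hs0 : 0 < s := by linarith
  rw [← Finset.sum_filter_add_sum_filter_not S (fun n => n ≤ m)]
  have h1 : ∑ n ∈ S with n ≤ m, |auxD s m n| * (n : ℝ) ^ (-(1 / 2) : ℝ) ≤
      4 * (m : ℝ) ^ (-(1 / 2) : ℝ) := by
    calc _ ≤ ∑ n ∈ S with n ≤ m, 2 * (m : ℝ)⁻¹ * (n : ℝ) ^ ((1 / 2 : ℝ) - 1) := by
          apply Finset.sum_le_sum
          intro n hn
          rw [Finset.mem_filter] at hn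
          have := aux_D_low s hs0 hs m n (hS n hn.1) hn.2
          rw [show (1 / 2 : ℝ) - 1 = -(1 / 2) by norm_num]
          gcongr
      _ = 2 * (m : ℝ)⁻¹ * ∑ n ∈ S with n ≤ m, (n : ℝ) ^ ((1 / 2 : ℝ) - 1) := by
          rw [Finset.mul_sum]
      _ ≤ 2 * (m : ℝ)⁻¹ * ∑ n ∈ Finset.Icc 1 m, (n : ℝ) ^ ((1 / 2 : ℝ) - 1) := by
          refine mul_le_mul_of_nonneg_left ?_ (by positivity)
          apply Finset.sum_le_sum_of_subset_of_nonneg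
          · intro n hn
            rw [Finset.mem_filter] at hn
            exact Finset.mem_Icc.2 ⟨hS n hn.1, hn.2⟩
          · intros; positivity
      _ ≤ 2 * (m : ℝ)⁻¹ * ((m : ℝ) ^ (1 / 2 : ℝ) / (1 / 2)) := by
          gcongr
          exact aux_lower _ (by norm_num) (by norm_num) m
      _ = _ := by
          rw [show (-(1 / 2) : ℝ) = 1 / 2 - 1 by norm_num, Real.rpow_sub hm', Real.rpow_one]
          field_simp; norm_num
  have h2 : ∑ n ∈ S with ¬ n ≤ m, |auxD s m n| * (n : ℝ) ^ (-(1 / 2) : ℝ) ≤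
      4 / (σ - 1 / 2) * (m : ℝ) ^ (-(1 / 2) : ℝ) := by
    calc _ ≤ ∑ n ∈ S with ¬ n ≤ m, 2 * (m : ℝ) ^ (σ - 1) * (n : ℝ) ^ (-(σ - 1 / 2) - 1) := by
          apply Finset.sum_le_sum
          intro n hn
          rw [Finset.mem_filter] at hn
          have hn' : (0:ℝ) < n := by exact_mod_cast hS n hn.1
          have := aux_D_high s σ hσ hs0 hs m n hm (by omega)
          rw [show -(σ - 1 / 2) - 1 = -σ + -(1 / 2) by ring, Real.rpow_add hn']
          calc _ ≤ (2 * ((m : ℝ) ^ (σ - 1) * (n : ℝ) ^ (-σ))) * (n : ℝ) ^ (-(1 / 2) : ℝ) := by gcongr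
            _ = _ := by ring
      _ = 2 * (m : ℝ) ^ (σ - 1) * ∑ n ∈ S with ¬ n ≤ m, (n : ℝ) ^ (-(σ - 1 / 2) - 1) := by
          rw [Finset.mul_sum]
      _ ≤ 2 * (m : ℝ) ^ (σ - 1) * (2 / (σ - 1 / 2) * (m : ℝ) ^ (-(σ - 1 / 2))) := by
          gcongr
          apply aux_upper _ (by linarith) (by linarith) m hm
          intro n hn
          rw [Finset.mem_filter] at hn
          omega
      _ = 4 / (σ - 1 / 2) * ((m : ℝ) ^ (σ - 1) * (m : ℝ) ^ (-(σ - 1 / 2))) := by ring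
      _ = _ := by
          rw [← Real.rpow_add hm']; congr 2; ring
  linarith

lemma aux_col (s σ : ℝ) (hσ0 : 1 / 2 < σ) (hσ1 : σ ≤ 1) (hσ : σ ≤ s) (hs : s ≤ 2) (n : ℕ)
    (hn : 1 ≤ n) (M : Finset ℕ) (hM : ∀ n ∈ M, 1 ≤ n) :
    ∑ m ∈ M, |auxD s m n| * (m : ℝ) ^ (-(1 / 2) : ℝ) ≤
      (8 + 2 / (σ - 1 / 2)) * (n : ℝ) ^ (-(1 / 2) : ℝ) := by
  have hn' : (0:ℝ) < n := by exact_mod_cast hn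
  have hs0 : 0 < s := by linarith
  rw [← Finset.sum_filter_add_sum_filter_not M (fun m => n ≤ m)]
  have h1 : ∑ m ∈ M with n ≤ m, |auxD s m n| * (m : ℝ) ^ (-(1 / 2) : ℝ) ≤
      8 * (n : ℝ) ^ (-(1 / 2) : ℝ) := by
    calc _ ≤ ∑ m ∈ M with n ≤ m, 2 * (m : ℝ) ^ (-(1 / 2 : ℝ) - 1) := by
          apply Finset.sum_le_sum
          intro m hm
          rw [Finset.mem_filter] at hm
          have hm' : (0:ℝ) < m := by exact_mod_cast hM m hm.1
          have := aux_D_low s hs0 hs m n hn hm.2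
          rw [Real.rpow_sub hm', Real.rpow_one]
          calc _ ≤ 2 * (m : ℝ)⁻¹ * (m : ℝ) ^ (-(1 / 2) : ℝ) := by gcongr
            _ = _ := by ring
      _ = 2 * ∑ m ∈ M with n ≤ m, (m : ℝ) ^ (-(1 / 2 : ℝ) - 1) := by
          rw [Finset.mul_sum]
      _ ≤ 2 * (2 / (1 / 2) * (n : ℝ) ^ (-(1 / 2 : ℝ))) := by
          gcongr
          apply aux_upper _ (by norm_num) (by norm_num) n hn
          intro n hn
          rw [Finset.mem_filter] at hn
          exact hn.2
      _ = _ := by ring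
  have h2 : ∑ m ∈ M with ¬ n ≤ m, |auxD s m n| * (m : ℝ) ^ (-(1 / 2) : ℝ) ≤
      2 / (σ - 1 / 2) * (n : ℝ) ^ (-(1 / 2) : ℝ) := by
    calc _ ≤ ∑ m ∈ M with ¬ n ≤ m, 2 * (n : ℝ) ^ (-σ) * (m : ℝ) ^ ((σ - 1 / 2) - 1) := by
          apply Finset.sum_le_sum
          intro m hm
          rw [Finset.mem_filter] at hm
          have hm' : (0:ℝ) < m := by exact_mod_cast hM m hm.1
          have := aux_D_high s σ hσ hs0 hs m n (hM m hm.1) (by omega)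
          rw [show (σ - 1 / 2) - 1 = (σ - 1) + -(1 / 2) by ring, Real.rpow_add hm']
          calc _ ≤ (2 * ((m : ℝ) ^ (σ - 1) * (n : ℝ) ^ (-σ))) * (m : ℝ) ^ (-(1 / 2) : ℝ) := by gcongr
            _ = _ := by ring
      _ = 2 * (n : ℝ) ^ (-σ) * ∑ m ∈ M with ¬ n ≤ m, (m : ℝ) ^ ((σ - 1 / 2) - 1) := by
          rw [Finset.mul_sum]
      _ ≤ 2 * (n : ℝ) ^ (-σ) * ∑ m ∈ Finset.Icc 1 n, (m : ℝ) ^ ((σ - 1 / 2) - 1) := by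
          refine mul_le_mul_of_nonneg_left ?_ (by positivity)
          apply Finset.sum_le_sum_of_subset_of_nonneg
          · intro m hm
            rw [Finset.mem_filter] at hm
            exact Finset.mem_Icc.2 ⟨hM m hm.1, by omega⟩
          · intros; positivity
      _ ≤ 2 * (n : ℝ) ^ (-σ) * ((n : ℝ) ^ (σ - 1 / 2) / (σ - 1 / 2)) := by
          gcongr
          exact aux_lower _ (by linarith) (by linarith) n
      _ = 2 / (σ - 1 / 2) * ((n : ℝ) ^ (-σ) * (n : ℝ) ^ (σ - 1 / 2)) := by ring
      _ = _ := by
          rw [← Real.rpow_add hn']; congr 2; ring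
  linarith

lemma aux_coef (s : ℝ) (a : ℕ → ℝ) (S : Finset ℕ)
    (h0 : ∑ n ∈ S, a n = 0) (h1 : ∑ n ∈ S, (-1 : ℝ) ^ n * a n = 0) (m : ℕ) (hm : 1 ≤ m) :
    (m : ℝ) ^ s * ∑ n ∈ S, a n * (m * auxK m n) =
      ∑ n ∈ S with 1 ≤ n, ((n : ℝ) ^ s * a n) * (m * auxK m n) +
      ∑ n ∈ S with 1 ≤ n, ((n : ℝ) ^ s * a n) * auxD s m n := by
  have hm' : (0:ℝ) < m := by exact_mod_cast hm
  have e1 : ∑ n ∈ S, a n * (m * auxK m n) = ∑ n ∈ S, a n * ((n : ℝ) ^ 2 / m * auxK m n) := by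
    rw [← sub_eq_zero, ← Finset.sum_sub_distrib]
    have : ∀ n ∈ S, a n * (m * auxK m n) - a n * ((n : ℝ) ^ 2 / m * auxK m n) =
        (1 / m) * a n - ((-1) ^ m / m) * ((-1 : ℝ) ^ n * a n) := by
      intro n _
      rw [auxK]
      rcases eq_or_ne m n with rfl | hne
      · have : (-1 : ℝ) ^ m * (-1) ^ m = 1 := by rw [← mul_pow]; simp
        have h : ((-1) ^ m / m : ℝ) * ((-1 : ℝ) ^ m * a m) = ((-1 : ℝ) ^ m * (-1) ^ m) * a m / m := by
          ring
        rw [h, this]; simp; ring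
      · have h3 : (m : ℝ) ^ 2 - (n : ℝ) ^ 2 ≠ 0 := by
          rw [sub_ne_zero]
          intro h
          have h' : m ^ 2 = n ^ 2 := by exact_mod_cast h
          exact hne (Nat.pow_left_injective (by norm_num : (2:ℕ) ≠ 0) h')
        field_simp
    rw [Finset.sum_congr rfl this, Finset.sum_sub_distrib, ← Finset.mul_sum, ← Finset.mul_sum, h0, h1]
    simp
  rw [e1, ← Finset.sum_add_distrib]
  have e2 : ∑ n ∈ S, a n * ((n : ℝ) ^ 2 / m * auxK m n) =
      ∑ n ∈ S with 1 ≤ n, a n * ((n : ℝ) ^ 2 / m * auxK m n) := by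
    symm
    apply Finset.sum_filter_of_ne
    intro n _ hne
    rcases Nat.eq_zero_or_pos n with rfl | h
    · simp at hne
    · exact h
  rw [e2, Finset.mul_sum]
  refine Finset.sum_congr rfl fun n hn => ?_
  rw [Finset.mem_filter] at hn
  have hn' : (0:ℝ) < n := by exact_mod_cast hn.2
  have hns := Real.rpow_pos_of_pos hn' s
  rw [auxD, Real.rpow_sub hm', Real.rpow_sub hn', Real.rpow_one]
  have : (n:ℝ) ^ (2:ℝ) = (n:ℝ) ^ 2 := by exact_mod_cast Real.rpow_natCast (n:ℝ) 2
  rw [this]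
  field_simp
  ring

theorem stmt7 (s : ℝ) (hs0 : 1 / 2 < s) (hs : s ≤ 2) :
    ∃ C > 0, ∀ a : ℕ → ℝ, ∀ ha : (Function.support a).Finite,
      (∑ n ∈ ha.toFinset, a n = 0) →
      (∑ n ∈ ha.toFinset, (-1 : ℝ) ^ n * a n = 0) →
      ∀ M : Finset ℕ, (∀ m ∈ M, 1 ≤ m) →
        ∑ m ∈ M, (m : ℝ) ^ (2 * s) *
            ((2 / π) * ∫ t in (0:ℝ)..π,
              (∑ n ∈ ha.toFinset, a n * Real.cos (n * t)) * Real.sin (m * t)) ^ 2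
          ≤ C * ∑ n ∈ ha.toFinset, (1 + (n : ℝ)) ^ (2 * s) * (a n) ^ 2 := by
  obtain ⟨σ, hσ0, hσ1, hσ⟩ : ∃ σ : ℝ, 1 / 2 < σ ∧ σ ≤ 1 ∧ σ ≤ s :=
    ⟨min s 1, lt_min hs0 (by norm_num), min_le_right _ _, min_le_left _ _⟩
  have hq : 0 < σ - 1 / 2 := by linarith
  set A := 4 + 4 / (σ - 1 / 2) with hA
  set B := 8 + 2 / (σ - 1 / 2) with hB
  have hA0 : 0 < A := by positivity
  have hB0 : 0 < B := by positivity
  have hpi := Real.pi_pos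
  refine ⟨2 + 2 * (2 / π) ^ 2 * (A * B), by positivity, ?_⟩
  intro a ha h0 h1 M hM
  set S := ha.toFinset with hS
  set T := S.filter (fun n => 1 ≤ n) with hT
  have hT1 : ∀ n ∈ T, 1 ≤ n := fun n hn => (Finset.mem_filter.1 hn).2
  set c : ℕ → ℝ := fun n => (n : ℝ) ^ s * a n with hc
  have hbes := aux_bessel T M c hT1 hM
  have hsch := aux_schur T M (auxD s) (fun n => (n : ℝ) ^ (-(1 / 2) : ℝ)) c A B hA0.le
    (fun n hn => Real.rpow_pos_of_pos (by exact_mod_cast hT1 n hn) _)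
    (fun n hn => Real.rpow_pos_of_pos (by exact_mod_cast hM n hn) _)
    (fun m hm => aux_row s σ hσ0 hσ1 hσ hs m (hM m hm) T hT1)
    (fun n hn => aux_col s σ hσ0 hσ1 hσ hs n (hT1 n hn) M hM)
  have hcs : ∑ n ∈ T, c n ^ 2 ≤ ∑ n ∈ S, (1 + (n : ℝ)) ^ (2 * s) * (a n) ^ 2 := by
    calc ∑ n ∈ T, c n ^ 2 ≤ ∑ n ∈ T, (1 + (n : ℝ)) ^ (2 * s) * (a n) ^ 2 := by
          apply Finset.sum_le_sum
          intro n _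
          have e : c n ^ 2 = (n : ℝ) ^ (2 * s) * (a n) ^ 2 := by
            rw [hc, mul_pow, mul_comm 2 s, Real.rpow_mul (Nat.cast_nonneg n)]
            norm_num
          rw [e]
          gcongr
          linarith
      _ ≤ _ := Finset.sum_le_sum_of_subset_of_nonneg (Finset.filter_subset _ _)
          (fun _ _ _ => by positivity)
  calc _ ≤ ∑ m ∈ M, (2 * ((2 / π) * ∑ n ∈ T, c n * (m * auxK m n)) ^ 2 +
        2 * (2 / π) ^ 2 * (∑ n ∈ T, c n * auxD s m n) ^ 2) := by
        apply Finset.sum_le_sum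
        intro m hm
        rw [aux_sum_int S a (fun n t => Real.cos (n * t)) (fun t => Real.sin (m * t))
          (fun n => by fun_prop) (by fun_prop)]
        simp_rw [aux_cos_sin]
        have hco := aux_coef s a S h0 h1 m (hM m hm)
        have e : (m : ℝ) ^ (2 * s) = ((m : ℝ) ^ s) ^ 2 := by
          rw [mul_comm 2 s, Real.rpow_mul (Nat.cast_nonneg m)]
          norm_num
        have e' : (m : ℝ) ^ (2 * s) * (2 / π * ∑ n ∈ S, a n * (m * auxK m n)) ^ 2 =
            (2 / π * ((m : ℝ) ^ s * ∑ n ∈ S, a n * (m * auxK m n))) ^ 2 := by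
          rw [e]; ring
        rw [e', hco]
        have := sq_nonneg (2 / π * (∑ n ∈ T, c n * (m * auxK m n)) -
          2 / π * (∑ n ∈ T, c n * auxD s m n))
        simp only [hc, hT] at this ⊢
        linarith
    _ = 2 * ∑ m ∈ M, ((2 / π) * ∑ n ∈ T, c n * (m * auxK m n)) ^ 2 +
        2 * (2 / π) ^ 2 * ∑ m ∈ M, (∑ n ∈ T, c n * auxD s m n) ^ 2 := by
        rw [Finset.sum_add_distrib, Finset.mul_sum, Finset.mul_sum]
    _ ≤ 2 * ∑ n ∈ T, c n ^ 2 + 2 * (2 / π) ^ 2 * (A * B * ∑ n ∈ T, c n ^ 2) := by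
        gcongr
    _ = (2 + 2 * (2 / π) ^ 2 * (A * B)) * ∑ n ∈ T, c n ^ 2 := by ring
    _ ≤ _ := by gcongr
end
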